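/- Let A be a set with a length function μ. (a) For any word 𝐰 = a₁(r₁)⋯a_k(r_k) in the alphabet {a(r) : a ∈ A, r ∈ ℝ}, the function t ↦ (1/t)·‖𝐰[t]‖_{F(A;μ)} (for t > 0) is Cauchy as t → ∞; in particular the limit lim_{t→∞} (1/t)‖𝐰[t]‖_{F(A;μ)} exists. (b) If two words 𝐰 and 𝐰' represent the same element of F_ℝ(A), then lim_{t→∞} (1/t)‖𝐰[t]‖_{F(A;μ)} = lim_{t→∞} (1/t)‖𝐰'[t]‖_{F(A;μ)}. -/

import Mathlib

/-!
Write `‖·‖` for the norm on `F(A)`: it satisfies the triangle inequality, is invariant under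
inversion and conjugation, and `‖a ^ m‖ ≤ |m| μ a`. Consequently changing the exponents of a word
changes its norm by at most the weighted total change of the exponents.

Convergence: the endomorphism `a ↦ a ^ n` of `F(A)` multiplies norms by at most `n`. Applied with
`n = ⌊s / t⌋` to `𝐰[t]`, it produces a word whose exponents differ from those of `𝐰[s]` by
`O(n + t)`. Hence `f(t) = ‖𝐰[t]‖ / t` satisfies `f(s) ≤ f(t) + C / t + (C + t D) / s`
(`wordNorm_truncFG_le`), and this forces convergence to the infimum of `f(t) + C / t`
(`exists_tendsto_of_almost_antitone`).

Independence of the word: functions `ℝ → F(A)` of bounded norm form a normal subgroup of the group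
of all functions. Modulo this subgroup, `a(r) ↦ (t ↦ a ^ ⟦t r⟧)` is additive in `r`, so by the
universal property of the free product it extends to a homomorphism on `F_ℝ(A)`, which sends the
class of `𝐰` to the class of `t ↦ 𝐰[t]` (`lift_wordProd`). Thus words representing the same
element have truncations at bounded distance, and this is negligible after division by `t`.
-/

open Filter

/-- The set of total lengths of expressions of `g` as a product of conjugates
of generators `gen i ^ {±1}`, each weighted by the length function `ℓ`. -/
def wordNormSet {G : Type*} [Group G] {I : Type*}
    (gen : I → G) (ℓ : I → ℝ) (g : G) : Set ℝ :=
  { x | ∃ l : List (G × I × Bool),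
      g = (l.map fun p => p.1 * (if p.2.2 then gen p.2.1 else (gen p.2.1)⁻¹) * p.1⁻¹).prod ∧
      x = (l.map fun p => ℓ p.2.1).sum }

/-- The conjugation-invariant word norm associated to a length function. -/
noncomputable def wordNorm {G : Type*} [Group G] {I : Type*}
    (gen : I → G) (ℓ : I → ℝ) (g : G) : ℝ :=
  sInf (wordNormSet gen ℓ g)

/-- `F_ℝ(A)`: the free product of copies of `ℝ` indexed by `A`. -/
abbrev FR (A : Type*) : Type _ := Monoid.CoprodI (fun _ : A => Multiplicative ℝ)

/-- The generator `a(r)` of `F_ℝ(A)`. -/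
def genFR (A : Type*) (p : A × ℝ) : FR A :=
  Monoid.CoprodI.of (i := p.1) (Multiplicative.ofAdd p.2)

/-- `⟦x⟧`: the floor of `x` for `x ≥ 0`, the ceiling of `x` for `x ≤ 0`. -/
noncomputable def myfloor (x : ℝ) : ℤ := if 0 ≤ x then ⌊x⌋ else ⌈x⌉

/-- The element of `F_ℝ(A)` represented by the word `𝐰 = a₁(r₁)⋯a_k(r_k)`. -/
def wordProd {A : Type*} (l : List (A × ℝ)) : FR A :=
  (l.map (genFR A)).prod

/-- The truncation `𝐰[t] = a₁^{⟦t r₁⟧} ⋯ a_k^{⟦t r_k⟧}` as an element of the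
free group `F(A)`. -/
noncomputable def truncFG {A : Type*} (l : List (A × ℝ)) (t : ℝ) : FreeGroup A :=
  (l.map fun p => FreeGroup.of p.1 ^ (myfloor (t * p.2))).prod

/-- The scaled norm function `t ↦ (1/t)·‖𝐰[t]‖_{F(A;μ)}`. -/
noncomputable def scaledTruncNorm {A : Type*} (μ : A → ℝ) (l : List (A × ℝ)) (t : ℝ) : ℝ :=
  (1 / t) * wordNorm FreeGroup.of μ (truncFG l t)

/-! ### The conjugation-invariant word norm -/

section WordNorm

variable {G : Type*} [Group G] {I : Type*} {gen : I → G} {ℓ : I → ℝ}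

theorem one_mem_wordNormSet : (0 : ℝ) ∈ wordNormSet gen ℓ 1 := ⟨[], by simp⟩

theorem mul_mem_wordNormSet {g h : G} {x y : ℝ} (hx : x ∈ wordNormSet gen ℓ g)
    (hy : y ∈ wordNormSet gen ℓ h) : x + y ∈ wordNormSet gen ℓ (g * h) := by
  obtain ⟨l, rfl, rfl⟩ := hx
  obtain ⟨m, rfl, rfl⟩ := hy
  exact ⟨l ++ m, by simp, by simp⟩

theorem generator_mem_wordNormSet (u : G) (i : I) (b : Bool) :
    ℓ i ∈ wordNormSet gen ℓ (u * (if b then gen i else (gen i)⁻¹) * u⁻¹) :=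
  ⟨[(u, i, b)], by simp, by simp⟩

theorem conj_mem_wordNormSet {g : G} {x : ℝ} (hx : x ∈ wordNormSet gen ℓ g) (u : G) :
    x ∈ wordNormSet gen ℓ (u * g * u⁻¹) := by
  obtain ⟨l, rfl, rfl⟩ := hx
  induction l with
  | nil => simpa using one_mem_wordNormSet
  | cons p l ih =>
    have := mul_mem_wordNormSet
      (generator_mem_wordNormSet (gen := gen) (ℓ := ℓ) (u * p.1) p.2.1 p.2.2) ih
    simp only [List.map_cons, List.prod_cons, List.sum_cons]
    convert this using 1
    group

theorem inv_mem_wordNormSet {g : G} {x : ℝ} (hx : x ∈ wordNormSet gen ℓ g) :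
    x ∈ wordNormSet gen ℓ g⁻¹ := by
  obtain ⟨l, rfl, rfl⟩ := hx
  induction l with
  | nil => simpa using one_mem_wordNormSet
  | cons p l ih =>
    have := mul_mem_wordNormSet ih
      (generator_mem_wordNormSet (gen := gen) (ℓ := ℓ) p.1 p.2.1 (!p.2.2))
    simp only [List.map_cons, List.prod_cons, List.sum_cons]
    rw [add_comm]
    convert this using 1
    rw [mul_inv_rev]
    congr 1
    cases p.2.2 <;> simp [mul_assoc]

theorem pow_mem_wordNormSet (i : I) (n : ℕ) : (n : ℝ) * ℓ i ∈ wordNormSet gen ℓ (gen i ^ n) := by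
  induction n with
  | zero => simpa using one_mem_wordNormSet
  | succ n ih =>
    have := mul_mem_wordNormSet ih (generator_mem_wordNormSet (gen := gen) (ℓ := ℓ) 1 i true)
    simpa [pow_succ, add_mul] using this

theorem zpow_mem_wordNormSet (i : I) (m : ℤ) :
    |(m : ℝ)| * ℓ i ∈ wordNormSet gen ℓ (gen i ^ m) := by
  obtain ⟨n, rfl | rfl⟩ := m.eq_nat_or_neg
  · simpa using pow_mem_wordNormSet i n
  · simpa using inv_mem_wordNormSet (pow_mem_wordNormSet i n)

theorem nonneg_of_mem_wordNormSet (hℓ : ∀ i, 0 ≤ ℓ i) {g : G} {x : ℝ}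
    (hx : x ∈ wordNormSet gen ℓ g) : 0 ≤ x := by
  obtain ⟨l, rfl, rfl⟩ := hx
  refine List.sum_nonneg fun y hy => ?_
  obtain ⟨p, -, rfl⟩ := List.mem_map.1 hy
  exact hℓ _

theorem wordNorm_le_of_mem (hℓ : ∀ i, 0 ≤ ℓ i) {g : G} {x : ℝ}
    (hx : x ∈ wordNormSet gen ℓ g) : wordNorm gen ℓ g ≤ x :=
  csInf_le ⟨0, fun _ => nonneg_of_mem_wordNormSet hℓ⟩ hx

theorem wordNorm_nonneg (hℓ : ∀ i, 0 ≤ ℓ i) (g : G) : 0 ≤ wordNorm gen ℓ g :=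
  Real.sInf_nonneg fun _ => nonneg_of_mem_wordNormSet hℓ

end WordNorm

/-! ### The norm on a free group -/

section FreeNorm

variable {A : Type*} {μ : A → ℝ}

/-- In a free group the letters generate, so the infimum defining the norm is not vacuous. -/
theorem wordNormSet_nonempty (g : FreeGroup A) :
    (wordNormSet FreeGroup.of μ g).Nonempty := by
  induction g using FreeGroup.induction_on with
  | C1 => exact ⟨_, one_mem_wordNormSet⟩
  | of a => exact ⟨_, by simpa using zpow_mem_wordNormSet (gen := FreeGroup.of) (ℓ := μ) a 1⟩
  | inv_of a ih => exact ⟨_, inv_mem_wordNormSet ih.some_mem⟩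
  | mul g h ihg ihh => exact ⟨_, mul_mem_wordNormSet ihg.some_mem ihh.some_mem⟩

theorem exists_mem_wordNormSet_lt (g : FreeGroup A) {ε : ℝ} (hε : 0 < ε) :
    ∃ x ∈ wordNormSet FreeGroup.of μ g, x < wordNorm FreeGroup.of μ g + ε :=
  exists_lt_of_csInf_lt (wordNormSet_nonempty g) (lt_add_of_pos_right _ hε)

theorem wordNorm_mul_le (hμ : ∀ a, 0 ≤ μ a) (g h : FreeGroup A) :
    wordNorm FreeGroup.of μ (g * h) ≤ wordNorm FreeGroup.of μ g + wordNorm FreeGroup.of μ h := by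
  refine le_of_forall_pos_le_add fun ε hε => ?_
  obtain ⟨x, hx, hxl⟩ := exists_mem_wordNormSet_lt (μ := μ) g (half_pos hε)
  obtain ⟨y, hy, hyl⟩ := exists_mem_wordNormSet_lt (μ := μ) h (half_pos hε)
  have := wordNorm_le_of_mem hμ (mul_mem_wordNormSet hx hy)
  linarith

theorem wordNorm_conj_le (hμ : ∀ a, 0 ≤ μ a) (u g : FreeGroup A) :
    wordNorm FreeGroup.of μ (u * g * u⁻¹) ≤ wordNorm FreeGroup.of μ g :=
  le_csInf (wordNormSet_nonempty g) fun _ hx => wordNorm_le_of_mem hμ (conj_mem_wordNormSet hx u)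

theorem wordNorm_inv_le (hμ : ∀ a, 0 ≤ μ a) (g : FreeGroup A) :
    wordNorm FreeGroup.of μ g⁻¹ ≤ wordNorm FreeGroup.of μ g :=
  le_csInf (wordNormSet_nonempty g) fun _ hx => wordNorm_le_of_mem hμ (inv_mem_wordNormSet hx)

theorem wordNorm_zpow_le (hμ : ∀ a, 0 ≤ μ a) (a : A) (m : ℤ) :
    wordNorm FreeGroup.of μ (FreeGroup.of a ^ m) ≤ |(m : ℝ)| * μ a :=
  wordNorm_le_of_mem hμ (zpow_mem_wordNormSet a m)

theorem wordNorm_le_add_inv_mul (hμ : ∀ a, 0 ≤ μ a) (g h : FreeGroup A) :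
    wordNorm FreeGroup.of μ h ≤
      wordNorm FreeGroup.of μ g + wordNorm FreeGroup.of μ (g⁻¹ * h) := by
  simpa using wordNorm_mul_le hμ g (g⁻¹ * h)

/-- The endomorphism of the free group raising every letter to the `n`-th power. -/
def powerEndo (A : Type*) (n : ℕ) : FreeGroup A →* FreeGroup A :=
  FreeGroup.lift fun a => FreeGroup.of a ^ n

theorem wordNorm_powerEndo_le (hμ : ∀ a, 0 ≤ μ a) (n : ℕ) (g : FreeGroup A) :
    wordNorm FreeGroup.of μ (powerEndo A n g) ≤ n * wordNorm FreeGroup.of μ g := by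
  have key : ∀ x ∈ wordNormSet FreeGroup.of μ g,
      (n : ℝ) * x ∈ wordNormSet FreeGroup.of μ (powerEndo A n g) := by
    rintro x ⟨l, rfl, rfl⟩
    induction l with
    | nil => simpa using one_mem_wordNormSet
    | cons p l ih =>
      simp only [List.map_cons, List.prod_cons, List.sum_cons, mul_add, map_mul, map_inv]
      refine mul_mem_wordNormSet (conj_mem_wordNormSet ?_ _) ih
      have h := pow_mem_wordNormSet (gen := FreeGroup.of) (ℓ := μ) p.2.1 n
      cases p.2.2
      · simpa [powerEndo] using inv_mem_wordNormSet h
      · simpa [powerEndo] using h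
  refine le_of_forall_pos_le_add fun ε hε => ?_
  obtain ⟨x, hx, hxl⟩ := exists_mem_wordNormSet_lt (μ := μ) g
    (show 0 < ε / (n + 1) by positivity)
  have h1 := wordNorm_le_of_mem hμ (key x hx)
  have h2 : (n : ℝ) * x ≤ n * (wordNorm FreeGroup.of μ g + ε / (n + 1)) := by gcongr
  have h3 : (n : ℝ) * (ε / (n + 1)) ≤ ε := by
    rw [mul_div_assoc', div_le_iff₀ (by positivity)]
    nlinarith
  linarith

/-- Changing the exponents in a product of powers of letters moves it, in the bi-invariant
metric, by at most the weighted total change of the exponents. -/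
theorem wordNorm_prod_inv_mul_prod_le (hμ : ∀ a, 0 ≤ μ a) (l : List (A × ℝ))
    (e f : A × ℝ → ℤ) :
    wordNorm FreeGroup.of μ ((l.map fun p => FreeGroup.of p.1 ^ e p).prod⁻¹ *
      (l.map fun p => FreeGroup.of p.1 ^ f p).prod) ≤
      (l.map fun p => |((f p - e p : ℤ) : ℝ)| * μ p.1).sum := by
  induction l with
  | nil => simpa using wordNorm_le_of_mem hμ (one_mem_wordNormSet (gen := FreeGroup.of) (ℓ := μ))
  | cons p l ih =>
    simp only [List.map_cons, List.prod_cons, List.sum_cons]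
    set g := (l.map fun p => FreeGroup.of p.1 ^ e p).prod
    set h := (l.map fun p => FreeGroup.of p.1 ^ f p).prod
    have hz := wordNorm_zpow_le hμ p.1 (f p - e p)
    have hc := wordNorm_conj_le hμ g⁻¹ (FreeGroup.of p.1 ^ (f p - e p))
    have hm := wordNorm_mul_le hμ (g⁻¹ * FreeGroup.of p.1 ^ (f p - e p) * g⁻¹⁻¹) (g⁻¹ * h)
    have heq : (FreeGroup.of p.1 ^ e p * g)⁻¹ * (FreeGroup.of p.1 ^ f p * h) =
        g⁻¹ * FreeGroup.of p.1 ^ (f p - e p) * g⁻¹⁻¹ * (g⁻¹ * h) := by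
      group
    rw [heq]
    linarith

theorem powerEndo_truncFG (n : ℕ) (l : List (A × ℝ)) (t : ℝ) :
    powerEndo A n (truncFG l t) =
      (l.map fun p => FreeGroup.of p.1 ^ ((n : ℤ) * myfloor (t * p.2))).prod := by
  simp only [truncFG, map_list_prod, List.map_map]
  congr 2
  funext p
  simp [powerEndo, zpow_mul]

/-! ### Convergence of the scaled norms -/

theorem abs_myfloor_sub_le (x : ℝ) : |(myfloor x : ℝ) - x| ≤ 1 := by
  unfold myfloor
  rw [abs_le]
  split_ifs
  · constructor <;> linarith [Int.floor_le x, Int.lt_floor_add_one x]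
  · constructor <;> linarith [Int.le_ceil x, Int.ceil_lt_add_one x]

/-- For `n = ⌊s / t⌋`, the truncation at `s` is within `O(n + t)` of the image of the truncation
at `t` under the `n`-th power endomorphism. -/
theorem wordNorm_truncFG_le (hμ : ∀ a, 0 ≤ μ a) (l : List (A × ℝ)) {s t : ℝ} (ht : 0 < t)
    (hs : 0 < s) :
    wordNorm FreeGroup.of μ (truncFG l s) ≤
      ⌊s / t⌋₊ * wordNorm FreeGroup.of μ (truncFG l t) +
        ((1 + ⌊s / t⌋₊) * (l.map fun p => μ p.1).sum + t * (l.map fun p => |p.2| * μ p.1).sum) := by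
  set n := ⌊s / t⌋₊
  have hn1 : (n : ℝ) * t ≤ s := by
    rw [← le_div_iff₀ ht]; exact Nat.floor_le (by positivity)
  have hn2 : s ≤ n * t + t := by
    have := (Nat.lt_floor_add_one (s / t)).le
    rw [div_le_iff₀ ht] at this
    linarith
  have h1 := wordNorm_le_add_inv_mul hμ (powerEndo A n (truncFG l t)) (truncFG l s)
  have h2 := wordNorm_powerEndo_le hμ n (truncFG l t)
  have h3 := wordNorm_prod_inv_mul_prod_le hμ l (fun p => (n : ℤ) * myfloor (t * p.2))
    (fun p => myfloor (s * p.2))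
  rw [← powerEndo_truncFG] at h3
  change wordNorm FreeGroup.of μ ((powerEndo A n (truncFG l t))⁻¹ * truncFG l s) ≤ _ at h3
  have h4 : (l.map fun p => |((myfloor (s * p.2) - n * myfloor (t * p.2) : ℤ) : ℝ)| * μ p.1).sum ≤
      (l.map fun p => (1 + n) * μ p.1 + t * (|p.2| * μ p.1)).sum := by
    refine List.sum_le_sum fun p _ => ?_
    rw [← mul_assoc, ← add_mul]
    refine mul_le_mul_of_nonneg_right ?_ (hμ _)
    push_cast
    have e1 := abs_myfloor_sub_le (s * p.2)
    have e2 := abs_myfloor_sub_le (t * p.2)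
    have e3 : (myfloor (s * p.2) : ℝ) - n * myfloor (t * p.2) =
        (myfloor (s * p.2) - s * p.2) - n * (myfloor (t * p.2) - t * p.2) +
          (s - n * t) * p.2 := by ring
    rw [e3]
    refine (abs_add_le _ _).trans (add_le_add ((abs_sub _ _).trans (add_le_add e1 ?_)) ?_)
    · rw [abs_mul, Nat.abs_cast]
      exact mul_le_of_le_one_right (Nat.cast_nonneg _) e2
    · rw [abs_mul, abs_of_nonneg (by linarith)]
      exact mul_le_mul_of_nonneg_right (by linarith) (abs_nonneg _)
  rw [List.sum_map_add, List.sum_map_mul_left, List.sum_map_mul_left] at h4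
  linarith

/-- A nonnegative function that is almost decreasing in this sense converges, namely to the
infimum of `f t + C / t`. -/
theorem exists_tendsto_of_almost_antitone {f : ℝ → ℝ} {C D : ℝ} (hC : 0 ≤ C)
    (hf : ∀ t, 0 < t → 0 ≤ f t)
    (h : ∀ s t, 0 < t → 0 < s → f s ≤ f t + C / t + (C + t * D) / s) :
    ∃ L, Tendsto f atTop (nhds L) := by
  set S := (fun t => f t + C / t) '' Set.Ioi 0
  have hSb : BddBelow S := by
    refine ⟨0, ?_⟩
    rintro _ ⟨t, ht, rfl⟩
    exact add_nonneg (hf t ht) (div_nonneg hC (le_of_lt ht))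
  have hSn : S.Nonempty := ⟨_, 1, by simp, rfl⟩
  have hdiv : ∀ c : ℝ, Tendsto (fun s : ℝ => c / s) atTop (nhds 0) := fun c =>
    tendsto_const_nhds.div_atTop tendsto_id
  refine ⟨sInf S, tendsto_order.2 ⟨fun a ha => ?_, fun a ha => ?_⟩⟩
  · filter_upwards [(hdiv C).eventually_lt_const (sub_pos.2 ha), eventually_gt_atTop 0] with s hs hs0
    have : sInf S ≤ f s + C / s := csInf_le hSb ⟨s, hs0, rfl⟩
    linarith
  · obtain ⟨_, ⟨t, ht, rfl⟩, hta⟩ := exists_lt_of_csInf_lt hSn ha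
    filter_upwards [(hdiv (C + t * D)).eventually_lt_const (sub_pos.2 hta),
      eventually_gt_atTop 0] with s hs hs0
    linarith [h s t ht hs0]

theorem exists_tendsto_scaledTruncNorm (hμ : ∀ a, 0 ≤ μ a) (l : List (A × ℝ)) :
    ∃ L : ℝ, Tendsto (scaledTruncNorm μ l) atTop (nhds L) := by
  have hC : 0 ≤ (l.map fun p => μ p.1).sum := by
    refine List.sum_nonneg fun y hy => ?_
    obtain ⟨p, -, rfl⟩ := List.mem_map.1 hy
    exact hμ _
  refine exists_tendsto_of_almost_antitone (C := (l.map fun p => μ p.1).sum)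
    (D := (l.map fun p => |p.2| * μ p.1).sum) hC
    (fun t ht => mul_nonneg (by positivity) (wordNorm_nonneg hμ _)) fun s t ht hs => ?_
  have h1 := wordNorm_truncFG_le hμ l ht hs
  have hN := wordNorm_nonneg (gen := FreeGroup.of) hμ (truncFG l t)
  unfold scaledTruncNorm
  set C := (l.map fun p => μ p.1).sum
  set D := (l.map fun p => |p.2| * μ p.1).sum
  set N := wordNorm FreeGroup.of μ (truncFG l t)
  have hn : (⌊s / t⌋₊ : ℝ) ≤ s / t := Nat.floor_le (by positivity)
  have h2 : (⌊s / t⌋₊ : ℝ) * (N + C) ≤ s / t * (N + C) :=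
    mul_le_mul_of_nonneg_right hn (by positivity)
  rw [one_div_mul_eq_div, div_le_iff₀ hs]
  have h3 : (1 / t * N + C / t + (C + t * D) / s) * s = s / t * (N + C) + (C + t * D) := by
    field_simp
  rw [h3]
  linarith

/-! ### Independence of the word -/

/-- The functions `ℝ → F(A)` of bounded norm, a normal subgroup of the group of all functions. -/
def boundedSubgroup (hμ : ∀ a, 0 ≤ μ a) : Subgroup (ℝ → FreeGroup A) where
  carrier := {f | ∃ C, ∀ t, wordNorm FreeGroup.of μ (f t) ≤ C}
  mul_mem' := by
    rintro f g ⟨C, hf⟩ ⟨D, hg⟩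
    exact ⟨C + D, fun t => (wordNorm_mul_le hμ _ _).trans (add_le_add (hf t) (hg t))⟩
  one_mem' := ⟨0, fun _ => wordNorm_le_of_mem hμ one_mem_wordNormSet⟩
  inv_mem' := by
    rintro f ⟨C, hf⟩
    exact ⟨C, fun t => (wordNorm_inv_le hμ _).trans (hf t)⟩

instance boundedSubgroup_normal (hμ : ∀ a, 0 ≤ μ a) : (boundedSubgroup hμ).Normal where
  conj_mem := by
    rintro f ⟨C, hf⟩ g
    exact ⟨C, fun t => (wordNorm_conj_le hμ _ _).trans (hf t)⟩

/-- The homomorphism `r ↦ [t ↦ a^⟦t r⟧]` from `ℝ` to functions modulo bounded functions; it is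
additive because `⟦·⟧` is additive up to a bounded error. -/
noncomputable def truncLetterHom (hμ : ∀ a, 0 ≤ μ a) (a : A) :
    Multiplicative ℝ →* (ℝ → FreeGroup A) ⧸ boundedSubgroup hμ :=
  MonoidHom.mk' (fun r => QuotientGroup.mk fun t => FreeGroup.of a ^ myfloor (t * r.toAdd)) (by
    intro r s
    rw [← QuotientGroup.mk_mul]
    refine QuotientGroup.eq.2 ⟨3 * μ a, fun t => ?_⟩
    simp only [Pi.mul_apply, Pi.inv_apply, toAdd_mul]
    rw [← zpow_neg, ← zpow_add, ← zpow_add]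
    refine (wordNorm_zpow_le hμ a _).trans (mul_le_mul_of_nonneg_right ?_ (hμ a))
    push_cast
    have e1 := abs_le.1 (abs_myfloor_sub_le (t * (r.toAdd + s.toAdd)))
    have e2 := abs_le.1 (abs_myfloor_sub_le (t * r.toAdd))
    have e3 := abs_le.1 (abs_myfloor_sub_le (t * s.toAdd))
    rw [mul_add] at e1 ⊢
    exact abs_le.2 ⟨by linarith, by linarith⟩)

theorem lift_wordProd (hμ : ∀ a, 0 ≤ μ a) (l : List (A × ℝ)) :
    Monoid.CoprodI.lift (truncLetterHom hμ) (wordProd l) = QuotientGroup.mk (truncFG l) := by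
  induction l with
  | nil =>
    simp only [wordProd, List.map_nil, List.prod_nil, map_one]
    rfl
  | cons p l ih =>
    have hcons : wordProd (p :: l) = genFR A p * wordProd l := by simp [wordProd]
    have htr : truncFG (p :: l) =
        (fun t => FreeGroup.of p.1 ^ myfloor (t * p.2)) * truncFG l := by
      funext t; simp [truncFG]
    rw [hcons, htr, map_mul, ih, QuotientGroup.mk_mul]
    congr 1

/-- Words representing the same element of `F_ℝ(A)` have truncations at bounded distance. -/
theorem exists_abs_wordNorm_sub_le (hμ : ∀ a, 0 ≤ μ a) {l l' : List (A × ℝ)}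
    (h : wordProd l = wordProd l') :
    ∃ C, ∀ t, |wordNorm FreeGroup.of μ (truncFG l' t) -
      wordNorm FreeGroup.of μ (truncFG l t)| ≤ C := by
  have hq := lift_wordProd hμ l
  rw [h, lift_wordProd] at hq
  obtain ⟨C, hC⟩ := QuotientGroup.eq.1 hq
  refine ⟨C, fun t => ?_⟩
  have h0 := hC t
  simp only [Pi.mul_apply, Pi.inv_apply] at h0
  have h1 := wordNorm_le_add_inv_mul hμ (truncFG l' t) (truncFG l t)
  have h2 := wordNorm_le_add_inv_mul hμ (truncFG l t) (truncFG l' t)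
  have h3 := wordNorm_inv_le hμ ((truncFG l' t)⁻¹ * truncFG l t)
  rw [mul_inv_rev, inv_inv] at h3
  exact abs_le.2 ⟨by linarith, by linarith⟩

end FreeNorm

/-- (a) for any word `𝐰 = a₁(r₁)⋯a_k(r_k)` the function `t ↦ (1/t)·‖𝐰[t]‖_{F(A;μ)}` is
Cauchy as `t → ∞`, and in particular has a limit;
(b) if two words `𝐰, 𝐰'` represent the same element of `F_ℝ(A)` then the two limits
coincide. -/
theorem scaledTruncNorm_cauchy_and_welldefined
    {A : Type*} (μ : A → ℝ) (hμ : ∀ a, 0 ≤ μ a) :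
    (∀ l : List (A × ℝ),
      (∀ ε > (0:ℝ), ∃ T : ℝ, ∀ s ≥ T, ∀ t ≥ T,
        |scaledTruncNorm μ l s - scaledTruncNorm μ l t| < ε) ∧
      (∃ L : ℝ, Tendsto (scaledTruncNorm μ l) atTop (nhds L))) ∧
    (∀ l l' : List (A × ℝ), wordProd l = wordProd l' →
      ∃ L : ℝ, Tendsto (scaledTruncNorm μ l) atTop (nhds L) ∧
        Tendsto (scaledTruncNorm μ l') atTop (nhds L)) := by
  refine ⟨fun l => ?_, fun l l' h => ?_⟩
  · obtain ⟨L, hL⟩ := exists_tendsto_scaledTruncNorm hμ l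
    refine ⟨fun ε hε => ?_, L, hL⟩
    obtain ⟨T, hT⟩ := Metric.cauchySeq_iff.1 hL.cauchySeq ε hε
    exact ⟨T, hT⟩
  · obtain ⟨L, hL⟩ := exists_tendsto_scaledTruncNorm hμ l
    refine ⟨L, hL, ?_⟩
    obtain ⟨C, hC⟩ := exists_abs_wordNorm_sub_le hμ h
    have hz : Tendsto (fun t => scaledTruncNorm μ l' t - scaledTruncNorm μ l t) atTop
        (nhds 0) := by
      refine squeeze_zero_norm' (a := fun t => C / t) ?_
        (tendsto_const_nhds.div_atTop tendsto_id)
      filter_upwards [eventually_gt_atTop 0] with t ht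
      rw [scaledTruncNorm, scaledTruncNorm, ← mul_sub, norm_mul, Real.norm_eq_abs,
        Real.norm_eq_abs, abs_of_pos (by positivity), one_div_mul_eq_div]
      exact div_le_div_of_nonneg_right (hC t) ht.le
    simpa using hz.add hL
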